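/- arXiv:2103.00277 — 2 statements merged into one kernel-verified Lean document; each statement's English description precedes it below -/
import Mathlib

section
/- For every n ≥ 0, the matrix C_n produced by the linear UKI covariance iteration is symmetric positive definite, and its inverse satisfies the closed formula C_n⁻¹ = (1 − 2⁻ⁿ) Gᵀ Σ_η⁻¹ G + 2⁻ⁿ C_0⁻¹. -/
open Matrix

/-!
The covariance update is the analysis step of a Kalman filter, which by the Woodbury identity adds
`Gᴴ Σ⁻¹ G` to the inverse covariance, where `Σ` is the observation noise. If the covariance is first
inflated to `ρ⁻¹ C` and the noise is `(1 - ρ)⁻¹ Ση`, then `C⁻¹` moves to the weighted mean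
`ρ C⁻¹ + (1 - ρ) Gᴴ Ση⁻¹ G`, so its difference from `Gᴴ Ση⁻¹ G` is multiplied by `ρ` at every step.
The UKI iteration is the case `ρ = 1 / 2`.
-/

theorem relaxation_closed_form {R M : Type*} [CommRing R] [AddCommGroup M] [Module R M] {r : R}
    {a : M} {x : ℕ → M} (hx : ∀ k, x (k + 1) = r • x k + (1 - r) • a) (k : ℕ) :
    x k = (1 - r ^ k) • a + r ^ k • x 0 := by
  induction k with
  | zero => simp
  | succ k ih =>
    rw [hx, ih]
    module

theorem matrix_inv_smul {K n : Type*} [Field K] [Fintype n] [DecidableEq n] (c : K)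
    (A : Matrix n n K) : (c • A)⁻¹ = c⁻¹ • A⁻¹ := by
  rcases eq_or_ne c 0 with rfl | hc
  · simp
  by_cases hA : IsUnit A.det
  · have := invertibleOfNonzero hc
    rw [inv_smul A c hA, invOf_eq_inv]
  · have hcA : ¬IsUnit (c • A).det := by simpa [det_smul, hc] using hA
    rw [nonsing_inv_apply_not_isUnit _ hcA, nonsing_inv_apply_not_isUnit _ hA, smul_zero]

section Kalman

variable {K m n : Type*} [Fintype m] [DecidableEq m] [Fintype n]

/-- The analysis covariance of a Kalman filter with prior covariance `P`, observation matrix `H`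
and observation noise covariance `R`. -/
noncomputable def kalmanCovariance [CommRing K] [StarRing K] (H : Matrix m n K) (R : Matrix m m K)
    (P : Matrix n n K) : Matrix n n K :=
  P - P * Hᴴ * (H * P * Hᴴ + R)⁻¹ * H * P

theorem kalmanCovariance_eq_inv [DecidableEq n] [CommRing K] [StarRing K] {H : Matrix m n K}
    {R : Matrix m m K} {P : Matrix n n K} (hR : IsUnit R) (hP : IsUnit P)
    (hHPR : IsUnit (H * P * Hᴴ + R)) :
    kalmanCovariance H R P = (P⁻¹ + Hᴴ * R⁻¹ * H)⁻¹ := by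
  have hRR : R⁻¹⁻¹ = R := nonsing_inv_nonsing_inv R ((isUnit_iff_isUnit_det R).1 hR)
  have hPP : P⁻¹⁻¹ = P := nonsing_inv_nonsing_inv P ((isUnit_iff_isUnit_det P).1 hP)
  have woodbury := add_mul_mul_inv_eq_sub P⁻¹ Hᴴ R⁻¹ H (isUnit_nonsing_inv_iff.2 hP)
    (isUnit_nonsing_inv_iff.2 hR) (by rwa [hRR, hPP, add_comm])
  rw [woodbury, hRR, hPP, add_comm R, kalmanCovariance]

variable [Field K] [PartialOrder K] [StarRing K] [StarOrderedRing K]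
  {H : Matrix m n K} {R : Matrix m m K} {P : Matrix n n K}

theorem kalmanCovariance_eq_inv_of_posDef [DecidableEq n] (hR : R.PosDef) (hP : P.PosDef) :
    kalmanCovariance H R P = (P⁻¹ + Hᴴ * R⁻¹ * H)⁻¹ :=
  kalmanCovariance_eq_inv hR.isUnit hP.isUnit
    (hR.posSemidef_add (hP.posSemidef.mul_mul_conjTranspose_same H)).isUnit

theorem posDef_inv_add_conjTranspose_mul_inv_mul [DecidableEq n] (hR : R.PosDef) (hP : P.PosDef) :
    (P⁻¹ + Hᴴ * R⁻¹ * H).PosDef :=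
  hP.inv.add_posSemidef (hR.inv.posSemidef.conjTranspose_mul_mul_same H)

theorem posDef_kalmanCovariance (hR : R.PosDef) (hP : P.PosDef) :
    (kalmanCovariance H R P).PosDef := by
  classical
  rw [kalmanCovariance_eq_inv_of_posDef hR hP]
  exact (posDef_inv_add_conjTranspose_mul_inv_mul hR hP).inv

theorem inv_kalmanCovariance [DecidableEq n] (hR : R.PosDef) (hP : P.PosDef) :
    (kalmanCovariance H R P)⁻¹ = P⁻¹ + Hᴴ * R⁻¹ * H := by
  rw [kalmanCovariance_eq_inv_of_posDef hR hP]
  exact nonsing_inv_nonsing_inv _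
    ((isUnit_iff_isUnit_det _).1 (posDef_inv_add_conjTranspose_mul_inv_mul hR hP).isUnit)

theorem inv_kalmanCovariance_smul_smul [DecidableEq n] {a b : K} (ha : 0 < a) (hb : 0 < b)
    (hR : R.PosDef) (hP : P.PosDef) :
    (kalmanCovariance H (a • R) (b • P))⁻¹ = b⁻¹ • P⁻¹ + a⁻¹ • (Hᴴ * R⁻¹ * H) := by
  rw [inv_kalmanCovariance (hR.smul ha) (hP.smul hb), matrix_inv_smul, matrix_inv_smul,
    Matrix.mul_smul, Matrix.smul_mul]

theorem linear_uki_covariance_closed_formula_general [DecidableEq n] [PosMulReflectLT K] {ρ : K}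
    (hρ : 0 < ρ) (hρ' : ρ < 1) (G : Matrix m n K) {Sη : Matrix m m K} (hSη : Sη.PosDef)
    {C : ℕ → Matrix n n K} (hC0 : (C 0).PosDef)
    (hrec : ∀ k, C (k + 1) = kalmanCovariance G ((1 - ρ)⁻¹ • Sη) (ρ⁻¹ • C k)) (k : ℕ) :
    (C k).PosDef ∧ (C k)⁻¹ = (1 - ρ ^ k) • (Gᴴ * Sη⁻¹ * G) + ρ ^ k • (C 0)⁻¹ := by
  have hinfl : 0 < ρ⁻¹ := inv_pos.2 hρ
  have hnoise : 0 < (1 - ρ)⁻¹ := inv_pos.2 (sub_pos.2 hρ')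
  have hpos : ∀ k, (C k).PosDef := by
    intro k
    induction k with
    | zero => exact hC0
    | succ k ih =>
      rw [hrec]
      exact posDef_kalmanCovariance (hSη.smul hnoise) (ih.smul hinfl)
  have hprec : ∀ k, (C (k + 1))⁻¹ = ρ • (C k)⁻¹ + (1 - ρ) • (Gᴴ * Sη⁻¹ * G) := by
    intro k
    rw [hrec, inv_kalmanCovariance_smul_smul hnoise hinfl hSη (hpos k), inv_inv, inv_inv]
  exact ⟨hpos k, relaxation_closed_form (x := fun k ↦ (C k)⁻¹) hprec k⟩

end Kalman

/-- **Closed formula for the linear UKI covariance iteration.** With hyperparameters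
`Σ_ω = C_n`, `Σ_ν = 2Σ_η`, i.e. `Ĉ_{n+1} = 2 C_n` and
`C_{n+1} = Ĉ_{n+1} − Ĉ_{n+1} Gᵀ (G Ĉ_{n+1} Gᵀ + 2Σ_η)⁻¹ G Ĉ_{n+1}`, each `C_n` is symmetric
positive definite and `C_n⁻¹ = (1 − 2⁻ⁿ) Gᵀ Σ_η⁻¹ G + 2⁻ⁿ C_0⁻¹`. -/
theorem linear_uki_covariance_closed_formula {Nθ Ny : ℕ}
    (G : Matrix (Fin Ny) (Fin Nθ) ℝ)
    (Sη : Matrix (Fin Ny) (Fin Ny) ℝ) (hSη : Sη.PosDef)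
    (C : ℕ → Matrix (Fin Nθ) (Fin Nθ) ℝ) (hC0 : (C 0).PosDef)
    (hrec : ∀ n, C (n + 1) =
      (2 : ℝ) • C n -
        ((2 : ℝ) • C n) * Gᵀ * (G * ((2 : ℝ) • C n) * Gᵀ + (2 : ℝ) • Sη)⁻¹ * G *
          ((2 : ℝ) • C n)) :
    ∀ n, (C n).PosDef ∧
      (C n)⁻¹ = (1 - (2 : ℝ)⁻¹ ^ n) • (Gᵀ * Sη⁻¹ * G) + (2 : ℝ)⁻¹ ^ n • (C 0)⁻¹ := by
  refine linear_uki_covariance_closed_formula_general (by norm_num) (by norm_num) G hSη hC0 ?_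
  simpa [kalmanCovariance, show (1 - 2⁻¹ : ℝ)⁻¹ = 2 by norm_num] using hrec
end

section
/- For every n ≥ 0, the covariance matrices of the linear UKI iteration satisfy the Loewner-order bound C_n ⪯ 2ⁿ C_0, i.e. 2ⁿ C_0 − C_n is positive semidefinite. -/
open Matrix

/-!
Each iteration is a Kalman analysis step applied to the inflated covariance `Ĉ = 2 • C n`: with `K`
the Kalman gain, `C (n + 1) = Ĉ - K * G * Ĉ`. The correction `K * G * Ĉ` is a congruence transform
of the inverse innovation covariance, hence positive semidefinite as long as `Ĉ` is, and so
`C (n + 1) ⪯ 2 • C n`. That the covariances stay positive semidefinite is the content of the Joseph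
form, which writes the updated covariance as a sum of two congruence transforms.
-/

section CommRing

variable {m n 𝕜 : Type*} [Fintype n] [CommRing 𝕜] [StarRing 𝕜]
  (G : Matrix m n 𝕜) (R : Matrix m m 𝕜) (P : Matrix n n 𝕜)

/-- The innovation covariance of the observation operator `G` with noise covariance `R`, when the
state has covariance `P`: the covariance of the observed quantity. -/
def innovationCov : Matrix m m 𝕜 :=
  G * P * Gᴴ + R

section Order

variable [Finite m] [PartialOrder 𝕜] [AddLeftMono 𝕜] {G R P}

theorem posSemidef_innovationCov (hR : R.PosSemidef) (hP : P.PosSemidef) :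
    (innovationCov G R P).PosSemidef :=
  (hP.mul_mul_conjTranspose_same G).add hR

theorem posDef_innovationCov (hR : R.PosDef) (hP : P.PosSemidef) :
    (innovationCov G R P).PosDef :=
  .posSemidef_add (hP.mul_mul_conjTranspose_same G) hR

end Order

variable [Fintype m] [DecidableEq m]

/-- The Kalman gain for the observation operator `G`, noise covariance `R` and prior state
covariance `P`. It is `0` when the innovation covariance is singular. -/
noncomputable def kalmanGain : Matrix n m 𝕜 :=
  P * Gᴴ * (innovationCov G R P)⁻¹

/-- The analysis step of the Kalman filter: the posterior covariance of a state with prior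
covariance `P`, observed through `G` with noise covariance `R`. -/
noncomputable def kalmanUpdate : Matrix n n 𝕜 :=
  P - kalmanGain G R P * G * P

variable {G R P}

theorem kalmanGain_mul_innovationCov (hS : IsUnit (innovationCov G R P)) :
    kalmanGain G R P * innovationCov G R P = P * Gᴴ :=
  nonsing_inv_mul_cancel_right _ _ ((isUnit_iff_isUnit_det _).1 hS)

theorem kalmanUpdate_eq_joseph_form [DecidableEq n] (hS : IsUnit (innovationCov G R P)) :
    kalmanUpdate G R P =
      (1 - kalmanGain G R P * G) * P * (1 - kalmanGain G R P * G)ᴴ +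
        kalmanGain G R P * R * (kalmanGain G R P)ᴴ := by
  have hgain := kalmanGain_mul_innovationCov hS
  rw [kalmanUpdate]
  set K := kalmanGain G R P
  have expand : (1 - K * G) * P * (1 - K * G)ᴴ + K * R * Kᴴ =
      P - K * G * P + (K * innovationCov G R P - P * Gᴴ) * Kᴴ := by
    simp only [innovationCov, conjTranspose_sub, conjTranspose_mul, conjTranspose_one,
      Matrix.mul_sub, Matrix.sub_mul, Matrix.mul_add, Matrix.add_mul, Matrix.mul_one,
      Matrix.one_mul, Matrix.mul_assoc]
    abel
  rw [expand, hgain, sub_self, Matrix.zero_mul, add_zero]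

variable [PartialOrder 𝕜] [AddLeftMono 𝕜]

theorem posSemidef_sub_kalmanUpdate (hR : R.PosSemidef) (hP : P.PosSemidef) :
    (P - kalmanUpdate G R P).PosSemidef := by
  have hcongr : P - kalmanUpdate G R P = (G * P)ᴴ * (innovationCov G R P)⁻¹ * (G * P) := by
    rw [kalmanUpdate, sub_sub_cancel, kalmanGain, conjTranspose_mul, hP.isHermitian.eq,
      Matrix.mul_assoc _ G P]
  rw [hcongr]
  exact (posSemidef_innovationCov hR hP).inv.conjTranspose_mul_mul_same (G * P)

theorem posSemidef_kalmanUpdate (hR : R.PosSemidef) (hP : P.PosSemidef)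
    (hS : IsUnit (innovationCov G R P)) : (kalmanUpdate G R P).PosSemidef := by
  classical
  rw [kalmanUpdate_eq_joseph_form hS]
  exact (hP.mul_mul_conjTranspose_same _).add (hR.mul_mul_conjTranspose_same _)

end CommRing

theorem posSemidef_pow_smul_sub_of_succ {n 𝕜 : Type*} [CommRing 𝕜] [PartialOrder 𝕜] [StarRing 𝕜]
    [StarOrderedRing 𝕜] {a : 𝕜} (ha : 0 ≤ a) {C : ℕ → Matrix n n 𝕜}
    (hC : ∀ k, (a • C k - C (k + 1)).PosSemidef) (k : ℕ) :
    (a ^ k • C 0 - C k).PosSemidef := by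
  induction k with
  | zero => simpa using PosSemidef.zero
  | succ k ih =>
    have htelescope : a ^ (k + 1) • C 0 - C (k + 1) =
        a • (a ^ k • C 0 - C k) + (a • C k - C (k + 1)) := by
      rw [smul_sub, smul_smul, pow_succ', sub_add_sub_cancel]
    rw [htelescope]
    exact (ih.smul ha).add (hC k)

section Field

variable {m n 𝕜 : Type*} [Fintype m] [DecidableEq m] [Fintype n]
  [Field 𝕜] [PartialOrder 𝕜] [StarRing 𝕜] [StarOrderedRing 𝕜]
  {G : ℕ → Matrix m n 𝕜} {R : ℕ → Matrix m m 𝕜} {a : 𝕜} {C : ℕ → Matrix n n 𝕜}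

theorem posSemidef_of_kalmanUpdate_recurrence (hR : ∀ k, (R k).PosDef) (ha : 0 ≤ a)
    (hC0 : (C 0).PosSemidef) (hrec : ∀ k, C (k + 1) = kalmanUpdate (G k) (R k) (a • C k)) (k : ℕ) :
    (C k).PosSemidef := by
  induction k with
  | zero => exact hC0
  | succ k ih =>
    have hP : (a • C k).PosSemidef := ih.smul ha
    rw [hrec]
    exact posSemidef_kalmanUpdate (hR k).posSemidef hP (posDef_innovationCov (hR k) hP).isUnit

theorem linear_uki_covariance_growth_bound_general (hR : ∀ k, (R k).PosDef) (ha : 0 ≤ a)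
    (hC0 : (C 0).PosSemidef) (hrec : ∀ k, C (k + 1) = kalmanUpdate (G k) (R k) (a • C k)) (k : ℕ) :
    (a ^ k • C 0 - C k).PosSemidef := by
  refine posSemidef_pow_smul_sub_of_succ ha (fun k ↦ ?_) k
  have hC : (C k).PosSemidef := posSemidef_of_kalmanUpdate_recurrence hR ha hC0 hrec k
  rw [hrec]
  exact posSemidef_sub_kalmanUpdate (hR k).posSemidef (hC.smul ha)

end Field

/-- **Growth bound for the linear UKI covariances.** For the linear UKI covariance iteration
(with `Σ_ω = C_n`, `Σ_ν = 2Σ_η`), one has the Loewner-order bound `C_n ⪯ 2ⁿ C_0` for every `n`,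
i.e. `2ⁿ C_0 − C_n` is positive semidefinite. -/
theorem linear_uki_covariance_growth_bound {Nθ Ny : ℕ}
    (G : Matrix (Fin Ny) (Fin Nθ) ℝ)
    (Sη : Matrix (Fin Ny) (Fin Ny) ℝ) (hSη : Sη.PosDef)
    (C : ℕ → Matrix (Fin Nθ) (Fin Nθ) ℝ) (hC0 : (C 0).PosDef)
    (hrec : ∀ n, C (n + 1) =
      (2 : ℝ) • C n -
        ((2 : ℝ) • C n) * Gᵀ * (G * ((2 : ℝ) • C n) * Gᵀ + (2 : ℝ) • Sη)⁻¹ * G *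
          ((2 : ℝ) • C n)) :
    ∀ n, ((2 : ℝ) ^ n • C 0 - C n).PosSemidef := by
  exact linear_uki_covariance_growth_bound_general (G := fun _ ↦ G) (R := fun _ ↦ (2 : ℝ) • Sη)
    (fun _ ↦ hSη.smul two_pos) zero_le_two hC0.posSemidef
    (by simpa only [kalmanUpdate, kalmanGain, innovationCov,
      conjTranspose_eq_transpose_of_trivial] using hrec)
end
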